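/- Assume V ∈ C¹(ℝ^N), c ∈ ℝ, condition (V^c) and the coercivity condition (1.7). If q ∈ ℳ_c and (τ, σ) ⊆ (α_q, ω_q) is any subinterval, then ½ ∫_τ^σ |q̇(t)|² dt = ∫_τ^σ (V(q(t)) − c) dt. -/

import Mathlib

open MeasureTheory Filter Metric Set Topology
open scoped ENNReal

noncomputable section

abbrev Euc (N : ℕ) := EuclideanSpace ℝ (Fin N)

def setDist {E : Type*} [PseudoMetricSpace E] (A B : Set E) : ℝ :=
  sInf ((fun p : E × E => dist p.1 p.2) '' (A ×ˢ B))

def IsH1loc {N : ℕ} (q q' : ℝ → Euc N) : Prop :=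
  LocallyIntegrable q' volume ∧
  (∀ a b : ℝ, IntegrableOn (fun t => ‖q' t‖ ^ 2) (Icc a b) volume) ∧
  (∀ a b : ℝ, q b - q a = ∫ t in a..b, q' t)

def lagJ {N : ℕ} (V : Euc N → ℝ) (c : ℝ) (q q' : ℝ → Euc N) (I : Set ℝ) : ℝ≥0∞ :=
  ∫⁻ t in I, ENNReal.ofReal (2⁻¹ * ‖q' t‖ ^ 2 + (V (q t) - c))

def Gamma {N : ℕ} (V : Euc N → ℝ) (c : ℝ) (Vm Vp : Set (Euc N)) :
    Set ((ℝ → Euc N) × (ℝ → Euc N)) :=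
  {p | IsH1loc p.1 p.2 ∧ (∀ t, c ≤ V (p.1 t)) ∧
    (∀ ε > 0, ∃ᶠ t in atBot, infDist (p.1 t) Vm < ε) ∧
    (∀ ε > 0, ∃ᶠ t in atTop, infDist (p.1 t) Vp < ε)}

def mc {N : ℕ} (V : Euc N → ℝ) (c : ℝ) (Vm Vp : Set (Euc N)) : ℝ≥0∞ :=
  ⨅ (p) (_ : p ∈ Gamma V c Vm Vp), lagJ V c p.1 p.2 univ

def Coercive {N : ℕ} (V : Euc N → ℝ) (c : ℝ) (Vm Vp : Set (Euc N)) (R : ℝ) : Prop :=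
  mc V c Vm Vp =
    ⨅ (p) (_ : p ∈ Gamma V c Vm Vp) (_ : ∀ t, ‖p.1 t‖ ≤ R), lagJ V c p.1 p.2 univ

/-- `ρ₀ := (1/4)·dist(𝒱⁻ ∩ B̄_R(0), 𝒱⁺ ∩ B̄_R(0))`. -/
def rho0 {N : ℕ} (Vm Vp : Set (Euc N)) (R : ℝ) : ℝ :=
  (1 / 4) * setDist (Vm ∩ closedBall 0 R) (Vp ∩ closedBall 0 R)

/-- membership in `ℳ_c`. -/
def MemM {N : ℕ} (V : Euc N → ℝ) (c : ℝ) (Vm Vp : Set (Euc N)) (R : ℝ)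
    (q q' : ℝ → Euc N) : Prop :=
  (q, q') ∈ Gamma V c Vm Vp ∧
  infDist (q 0) {x | V x ≤ c} = rho0 Vm Vp R ∧
  lagJ V c q q' univ = mc V c Vm Vp ∧
  (∀ t, ‖q t‖ ≤ R)

/-- `α_q` (valued in `[-∞,+∞]`, with `−∞` when `q(ℝ) ∩ 𝒱⁻ = ∅`). -/
def alphaQ {N : ℕ} (Vm : Set (Euc N)) (q : ℝ → Euc N) : EReal :=
  sSup {x : EReal | ∃ t : ℝ, x = (t : EReal) ∧ q t ∈ Vm}

/-- `ω_q` (valued in `[-∞,+∞]`, with `+∞` when there is no `t > α_q` with `q(t) ∈ 𝒱⁺`). -/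
def omegaQ {N : ℕ} (Vm Vp : Set (Euc N)) (q : ℝ → Euc N) : EReal :=
  sInf {x : EReal | ∃ t : ℝ, x = (t : EReal) ∧ alphaQ Vm q < (t : EReal) ∧ q t ∈ Vp}

/-- reflection of `q` with respect to `b` (used for `t > b`). -/
def reflPlus {N : ℕ} (q : ℝ → Euc N) (b : ℝ) : ℝ → Euc N :=
  fun t => if t ≤ b then q t else q (2 * b - t)

/-- reflection of `q` with respect to `a` (used for `t < a`). -/
def reflMinus {N : ℕ} (q : ℝ → Euc N) (a : ℝ) : ℝ → Euc N :=
  fun t => if a ≤ t then q t else q (2 * a - t)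

/-- ω-limit set `Ω_q := ⋂_{t > α_q} closure {q(s) : s ≥ t}`. -/
def omegaLimitSet {N : ℕ} (Vm : Set (Euc N)) (q : ℝ → Euc N) : Set (Euc N) :=
  ⋂ (t : ℝ) (_ : alphaQ Vm q < (t : EReal)), closure (q '' Ici t)

/-- α-limit set `𝒜_q := ⋂_{t < ω_q} closure {q(s) : s ≤ t}`. -/
def alphaLimitSet {N : ℕ} (Vm Vp : Set (Euc N)) (q : ℝ → Euc N) : Set (Euc N) :=
  ⋂ (t : ℝ) (_ : (t : EReal) < omegaQ Vm Vp q), closure (q '' Iic t)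

theorem h1_iff {N : ℕ} (q q' : ℝ → Euc N) : IsH1loc q q' ↔
    (∀ a b : ℝ, IntervalIntegrable q' volume a b) ∧
    (∀ a b : ℝ, IntervalIntegrable (fun t => ‖q' t‖ ^ 2) volume a b) ∧
    (∀ a b : ℝ, q b - q a = ∫ t in a..b, q' t) := by
  have key : ∀ {F : Type} [NormedAddCommGroup F] (f : ℝ → F),
      (∀ a b : ℝ, IntegrableOn f (Icc a b) volume) ↔
      (∀ a b : ℝ, IntervalIntegrable f volume a b) := by
    intro F _ f
    constructor
    · intro h a b
      rw [intervalIntegrable_iff]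
      exact (h _ _).mono_set uIoc_subset_uIcc
    · intro h a b
      rcases le_total a b with hab | hab
      · exact (intervalIntegrable_iff_integrableOn_Icc_of_le hab).1 (h a b)
      · refine (h a a |> (intervalIntegrable_iff_integrableOn_Icc_of_le le_rfl).1).mono_set ?_
        intro x hx
        have h1 := hx.1
        have h2 := hx.2
        constructor <;> linarith
  have h2 : LocallyIntegrable q' volume ↔ (∀ a b : ℝ, IntegrableOn q' (Icc a b) volume) := by
    constructor
    · intro h a b
      exact h.integrableOn_isCompact isCompact_Icc
    · intro h x
      exact ⟨Icc (x - 1) (x + 1), Icc_mem_nhds (by linarith) (by linarith), h _ _⟩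
  unfold IsH1loc
  rw [h2, key, key]

theorem h1_cont {N : ℕ} {q q' : ℝ → Euc N} (h : IsH1loc q q') : Continuous q := by
  rw [h1_iff] at h
  have : q = fun t => q 0 + ∫ s in (0:ℝ)..t, q' s := by
    funext t
    rw [← h.2.2 0 t]; abel
  rw [this]
  exact continuous_const.add (intervalIntegral.continuous_primitive (fun a b => h.1 a b) 0)

theorem h1_deriv {N : ℕ} {q q' : ℝ → Euc N} (h : IsH1loc q q') :
    ∀ᵐ t, deriv q t = q' t := by
  have h1 := LocallyIntegrable.ae_hasDerivAt_integral h.1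
  have : q = fun t => q 0 + ∫ s in (0:ℝ)..t, q' s := by
    funext t
    rw [← h.2.2 0 t]; abel
  filter_upwards [h1] with t ht
  rw [this]
  exact ((ht 0).const_add (q 0)).deriv

def glue {N : ℕ} (s : ℝ) (f g : ℝ → Euc N) : ℝ → Euc N := fun t => if t ≤ s then f t else g t

theorem glue_le {N : ℕ} {s t : ℝ} (f g : ℝ → Euc N) (h : t ≤ s) : glue s f g t = f t := if_pos h
theorem glue_gt {N : ℕ} {s t : ℝ} (f g : ℝ → Euc N) (h : s < t) : glue s f g t = g t :=
  if_neg (not_le.2 h)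

theorem ii_glue {F : Type*} [NormedAddCommGroup F] {s : ℝ} {f g h : ℝ → F}
    (hf : ∀ a b : ℝ, IntervalIntegrable f volume a b)
    (hg : ∀ a b : ℝ, IntervalIntegrable g volume a b)
    (h1 : ∀ t ≤ s, h t = f t) (h2 : ∀ t, s < t → h t = g t) (a b : ℝ) :
    IntervalIntegrable h volume a b := by
  have base : ∀ b, IntervalIntegrable h volume s b := by
    intro b
    rcases le_total s b with hb | hb
    · refine (hg s b).congr (fun t ht => ?_)
      rw [uIoc_of_le hb] at ht
      exact (h2 t ht.1).symm
    · refine (hf s b).congr (fun t ht => ?_)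
      rw [uIoc_of_ge hb] at ht
      exact (h1 t ht.2).symm
  exact (base a).symm.trans (base b)

theorem h1_glue {N : ℕ} {s : ℝ} {f f' g g' : ℝ → Euc N} (hf : IsH1loc f f') (hg : IsH1loc g g')
    (hs : f s = g s) : IsH1loc (glue s f g) (glue s f' g') := by
  rw [h1_iff] at *
  have i1 := ii_glue (h := glue s f' g') hf.1 hg.1 (fun t ht => glue_le _ _ ht)
    (fun t ht => glue_gt _ _ ht)
  refine ⟨i1, ?_, ?_⟩
  · exact ii_glue hf.2.1 hg.2.1 (s := s) (fun t ht => by simp only [glue_le _ _ ht])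
      (fun t ht => by simp only [glue_gt _ _ ht])
  · have base : ∀ b, glue s f g b - glue s f g s = ∫ t in s..b, glue s f' g' t := by
      intro b
      rw [glue_le f g le_rfl]
      rcases le_or_gt b s with hb | hb
      · rw [glue_le f g hb, hf.2.2 s b]
        apply intervalIntegral.integral_congr_ae
        refine ae_of_all _ (fun t ht => ?_)
        rw [uIoc_of_ge hb] at ht
        exact (glue_le _ _ ht.2).symm
      · rw [glue_gt f g hb, hs, hg.2.2 s b]
        apply intervalIntegral.integral_congr_ae
        refine ae_of_all _ (fun t ht => ?_)
        rw [uIoc_of_le hb.le] at ht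
        exact (glue_gt _ _ ht.1).symm
    intro a b
    rw [← intervalIntegral.integral_interval_sub_left (i1 s b) (i1 s a), ← base, ← base]
    abel

theorem ii_affine {F : Type*} [NormedAddCommGroup F] {f : ℝ → F}
    (hf : ∀ a b : ℝ, IntervalIntegrable f volume a b) {l : ℝ} (hl : l ≠ 0) (d a b : ℝ) :
    IntervalIntegrable (fun t => f (l * t + d)) volume a b := by
  have h1 := (hf (l * a + d) (l * b + d)).comp_add_right d
  have h2 := h1.comp_mul_left (c := l)
  have e : ∀ x : ℝ, (l * x + d - d) / l = x := by intro x; field_simp; ring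
  rwa [e, e] at h2

theorem h1_affine {N : ℕ} {q q' : ℝ → Euc N} (h : IsH1loc q q') {l : ℝ} (hl : l ≠ 0) (d : ℝ) :
    IsH1loc (fun t => q (l * t + d)) (fun t => l • q' (l * t + d)) := by
  rw [h1_iff] at *
  refine ⟨fun a b => (ii_affine h.1 hl d a b).smul l, fun a b => ?_, fun a b => ?_⟩
  · have := (ii_affine h.2.1 hl d a b).const_mul (l ^ 2)
    refine this.congr (fun t _ => ?_)
    simp [norm_smul, mul_pow]
  · rw [intervalIntegral.integral_smul, intervalIntegral.smul_integral_comp_mul_add, h.2.2]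

theorem h1_line {N : ℕ} (x v : Euc N) (s : ℝ) : IsH1loc (fun t => x + (t - s) • v) (fun _ => v) := by
  rw [h1_iff]
  refine ⟨fun a b => intervalIntegrable_const, fun a b => intervalIntegrable_const, fun a b => ?_⟩
  rw [intervalIntegral.integral_const]
  module

theorem lagJ_congr {N : ℕ} (V : Euc N → ℝ) (c : ℝ) {p p' q q' : ℝ → Euc N} {I : Set ℝ}
    (hI : MeasurableSet I) (h : ∀ t ∈ I, p t = q t) (h' : ∀ t ∈ I, p' t = q' t) :
    lagJ V c p p' I = lagJ V c q q' I := by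
  unfold lagJ
  apply setLIntegral_congr_fun hI
  intro t ht
  simp only [h t ht, h' t ht]

theorem lagJ_split {N : ℕ} (V : Euc N → ℝ) (c : ℝ) (p p' : ℝ → Euc N) {a b : ℝ} (hab : a ≤ b) :
    lagJ V c p p' univ = lagJ V c p p' (Iic a) + lagJ V c p p' (Ioc a b)
      + lagJ V c p p' (Ioi b) := by
  unfold lagJ
  rw [← lintegral_union measurableSet_Ioc (by
      rw [Set.disjoint_left]; intro x hx hx'; exact (not_le.2 hx'.1) hx),
    Iic_union_Ioc_eq_Iic hab,
    ← lintegral_union measurableSet_Ioi (by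
      rw [Set.disjoint_left]; intro x hx hx'; exact (not_le.2 (mem_Ioi.1 hx')) hx), Iic_union_Ioi]

theorem lagJ_Ioc {N : ℕ} {V : Euc N → ℝ} (hV : Continuous V) (c : ℝ) {p p' : ℝ → Euc N}
    (h : IsH1loc p p') (hc : ∀ t, c ≤ V (p t)) {a b : ℝ} (hab : a ≤ b) :
    lagJ V c p p' (Ioc a b) = ENNReal.ofReal
      (2⁻¹ * (∫ t in a..b, ‖p' t‖ ^ 2) + ∫ t in a..b, (V (p t) - c)) := by
  have hi := ((h1_iff _ _).1 h).2.1 a b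
  have hv : IntervalIntegrable (fun t => V (p t) - c) volume a b :=
    ((hV.comp (h1_cont h)).sub continuous_const).intervalIntegrable a b
  have hk := hi.const_mul 2⁻¹
  rw [← intervalIntegral.integral_const_mul, ← intervalIntegral.integral_add hk hv,
    intervalIntegral.integral_of_le hab]
  unfold lagJ
  rw [ofReal_integral_eq_lintegral_ofReal]
  · exact (intervalIntegrable_iff_integrableOn_Ioc_of_le hab).1 (hk.add hv)
  · refine ae_of_all _ (fun t => ?_)
    have := hc t
    simp only [Pi.zero_apply]
    have : 0 ≤ ‖p' t‖ ^ 2 := by positivity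
    linarith

theorem lagJ_const {N : ℕ} {V : Euc N → ℝ} {c : ℝ} {p p' : ℝ → Euc N} {I : Set ℝ}
    (hI : MeasurableSet I) (h : ∀ t ∈ I, V (p t) = c) (h' : ∀ t ∈ I, p' t = 0) :
    lagJ V c p p' I = 0 := by
  unfold lagJ
  rw [setLIntegral_congr_fun (g := fun _ => 0) hI]
  · simp
  · intro t ht
    simp [h t ht, h' t ht]

theorem cap {N : ℕ} {V : Euc N → ℝ} (hV : Continuous V) {c : ℝ} {A B : Set (Euc N)}
    (hAB : {x | V x ≤ c} = A ∪ B) {δ : ℝ} (hδ : 0 < δ) (hA : A.Nonempty)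
    (hd : ∀ x ∈ A, ∀ y ∈ B, δ ≤ dist x y)
    {q q' : ℝ → Euc N} (hq : IsH1loc q q') (hc : ∀ t, c ≤ V (q t))
    (hf : ∃ᶠ t in atTop, infDist (q t) A < δ) :
    ∃ (p p' : ℝ → Euc N) (T : ℝ) (x : Euc N), IsH1loc p p' ∧ (∀ t, c ≤ V (p t)) ∧
      p 0 = q 0 ∧ x ∈ A ∧ V x = c ∧ 0 ≤ T ∧ (∀ t, T < t → p t = x ∧ p' t = 0) := by
  obtain ⟨s, hs, hs0⟩ := (hf.and_eventually (eventually_ge_atTop 0)).exists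
  obtain ⟨z, hzA, hz⟩ := (infDist_lt_iff hA).1 hs
  set v := z - q s with hv
  let S : Set ℝ := {r | r ∈ Icc (0:ℝ) 1 ∧ V (q s + r • v) ≤ c}
  have hcont : Continuous (fun r : ℝ => V (q s + r • v)) :=
    hV.comp (continuous_const.add (continuous_id.smul continuous_const))
  have hScl : IsCompact S :=
    isCompact_Icc.inter_right (isClosed_le hcont continuous_const)
  have hSne : S.Nonempty := by
    refine ⟨1, ⟨by norm_num, le_rfl⟩, ?_⟩
    have : z ∈ {x | V x ≤ c} := by rw [hAB]; exact Or.inl hzA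
    simpa [hv] using this
  obtain ⟨r, ⟨⟨hr0, hr1⟩, hrc⟩, hmin⟩ := hScl.exists_isLeast hSne
  have hlt : ∀ u, 0 ≤ u → u < r → c ≤ V (q s + u • v) := by
    intro u hu0 hur
    by_contra hcon
    exact absurd (hmin ⟨⟨hu0, by linarith⟩, (not_le.1 hcon).le⟩) (not_le.2 hur)
  have hrge : c ≤ V (q s + r • v) := by
    rcases hr0.eq_or_lt with h0 | h0
    · rw [← h0]; simpa using hc s
    · have hcl : IsClosed {u : ℝ | c ≤ V (q s + u • v)} := isClosed_le continuous_const hcont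
      have : closure (Ico 0 r) ⊆ {u : ℝ | c ≤ V (q s + u • v)} :=
        hcl.closure_subset_iff.2 (fun u hu => hlt u hu.1 hu.2)
      rw [closure_Ico h0.ne] at this
      exact this ⟨h0.le, le_rfl⟩
  set x := q s + r • v with hx
  have hVx : V x = c := le_antisymm hrc hrge
  have hxA : x ∈ A := by
    have : x ∈ {x | V x ≤ c} := hrc
    rw [hAB] at this
    rcases this with h | h
    · exact h
    · exfalso
      have h1 := hd z hzA x h
      have h2 : z - x = (1 - r) • v := by rw [hx, hv]; module
      rw [dist_eq_norm, h2, norm_smul, Real.norm_eq_abs, abs_of_nonneg (by linarith)] at h1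
      rw [dist_comm, dist_eq_norm] at hz
      have h3 : 0 ≤ ‖v‖ := norm_nonneg _
      nlinarith
  have H1 := h1_glue (s := s + r) (h1_line (q s) v s) (h1_line x 0 0) (by simp [hx])
  have H2 := h1_glue (s := s) hq H1 (by rw [glue_le _ _ (by linarith)]; simp)
  refine ⟨_, _, s + r, x, H2, ?_, ?_, hxA, hVx, by linarith, ?_⟩
  · intro t
    rcases le_or_gt t s with h | h
    · rw [glue_le _ _ h]; exact hc t
    · rw [glue_gt _ _ h]
      rcases le_or_gt t (s + r) with h' | h'
      · rw [glue_le _ _ h']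
        rcases h'.eq_or_lt with h'' | h''
        · rw [h'', add_sub_cancel_left]; exact hrge
        · exact hlt _ (by linarith) (by linarith)
      · rw [glue_gt _ _ h']; simp [hVx]
  · exact glue_le _ _ hs0
  · intro t ht
    rw [glue_gt _ _ (by linarith : s < t), glue_gt _ _ (by linarith : s < t), glue_gt _ _ ht,
      glue_gt _ _ ht]
    simp

theorem mc_lt_top {N : ℕ} {V : Euc N → ℝ} (hV : Continuous V)
    {c : ℝ} {Vm Vp : Set (Euc N)}
    (hsplit : {x | V x ≤ c} = Vm ∪ Vp) (hsep : 0 < setDist Vm Vp)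
    {q q' : ℝ → Euc N} (hq : (q, q') ∈ Gamma V c Vm Vp) : mc V c Vm Vp < ∞ := by
  obtain ⟨h1, h2, h3, h4⟩ := hq
  simp only at h1 h2 h3 h4
  have hne : Vm.Nonempty ∧ Vp.Nonempty := by
    by_contra hcon
    have : Vm ×ˢ Vp = ∅ := by
      rw [← Set.not_nonempty_iff_eq_empty, Set.prod_nonempty_iff]; exact hcon
    simp [setDist, this] at hsep
  have hd : ∀ x ∈ Vm, ∀ y ∈ Vp, setDist Vm Vp ≤ dist x y := by
    intro x hx y hy
    refine csInf_le ⟨0, ?_⟩ ⟨(x, y), ⟨hx, hy⟩, rfl⟩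
    rintro _ ⟨p, _, rfl⟩
    exact dist_nonneg
  obtain ⟨f, f', T, x, hf, hfc, hf0, hxA, hVx, hT, hfT⟩ := cap hV (A := Vp) (B := Vm)
    (by rw [hsplit, union_comm]) hsep hne.2
    (fun x hx y hy => by rw [dist_comm]; exact hd y hy x hx) h1 h2 (h4 _ hsep)
  have hfr : ∃ᶠ t in atTop, infDist (q (-1 * t + 0)) Vm < setDist Vm Vp := by
    have h := h3 _ hsep
    rw [frequently_atBot] at h
    rw [frequently_atTop]
    intro a
    obtain ⟨b, hb, hb'⟩ := h (-a)
    exact ⟨-b, by linarith, by simpa using hb'⟩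
  obtain ⟨g, g', S, y, hg, hgc, hg0, hyA, hVy, hS, hgS⟩ := cap hV (A := Vm) (B := Vp)
    hsplit hsep hne.1 hd (h1_affine h1 (l := -1) (by norm_num) 0)
    (fun t => h2 _) hfr
  have H := h1_glue (s := 0) (h1_affine hg (l := -1) (by norm_num) 0) hf (by simp [hg0, hf0])
  set P := glue 0 (fun t => g (-1 * t + 0)) f with hP
  set P' := glue 0 (fun t => (-1 : ℝ) • g' (-1 * t + 0)) f' with hP'
  have hPc : ∀ t, c ≤ V (P t) := by
    intro t
    rcases le_or_gt t 0 with h | h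
    · rw [hP, glue_le _ _ h]; exact hgc _
    · rw [hP, glue_gt _ _ h]; exact hfc _
  have hR : ∀ t, T < t → P t = x ∧ P' t = 0 := by
    intro t ht
    rw [hP, hP', glue_gt _ _ (by linarith : 0 < t), glue_gt _ _ (by linarith : 0 < t)]
    exact hfT t ht
  have hL : ∀ t, t ≤ -(S + 1) → P t = y ∧ P' t = 0 := by
    intro t ht
    rw [hP, hP', glue_le _ _ (by linarith : t ≤ 0), glue_le _ _ (by linarith : t ≤ 0)]
    have := hgS (-1 * t + 0) (by linarith)
    rw [this.1, this.2]
    simp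
  have hG : (P, P') ∈ Gamma V c Vm Vp := by
    refine ⟨H, hPc, fun ε hε => ?_, fun ε hε => ?_⟩
    · refine Eventually.frequently ?_
      filter_upwards [eventually_le_atBot (-(S + 1))] with t ht
      simp only [(hL t ht).1, infDist_zero_of_mem hyA, hε]
    · refine Eventually.frequently ?_
      filter_upwards [eventually_gt_atTop T] with t ht
      simp only [(hR t ht).1, infDist_zero_of_mem hxA, hε]
  refine lt_of_le_of_lt (iInf₂_le (P, P') hG) ?_
  rw [lagJ_split V c P P' (a := -(S + 1)) (b := T) (by linarith),
    lagJ_const (I := Iic _) measurableSet_Iic (fun t ht => by rw [(hL t ht).1, hVy])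
      (fun t ht => (hL t ht).2),
    lagJ_const (I := Ioi _) measurableSet_Ioi (fun t ht => by rw [(hR t ht).1, hVx])
      (fun t ht => (hR t ht).2), lagJ_Ioc hV c H hPc (by linarith)]
  simp

theorem lagJ_shift {N : ℕ} (V : Euc N → ℝ) (c : ℝ) (p p' : ℝ → Euc N) (b d : ℝ) :
    lagJ V c (fun t => p (1 * t + d)) (fun t => (1:ℝ) • p' (1 * t + d)) (Ioi b) =
      lagJ V c p p' (Ioi (b + d)) := by
  have := (measurePreserving_add_right (volume : Measure ℝ) d).setLIntegral_comp_preimage_emb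
    (measurableEmbedding_addRight d)
    (fun t => ENNReal.ofReal (2⁻¹ * ‖p' t‖ ^ 2 + (V (p t) - c))) (Ioi (b + d))
  unfold lagJ
  rw [← this]
  simp

theorem scale_ineq {N : ℕ} {V : Euc N → ℝ} (hV : Continuous V)
    {c : ℝ} {Vm Vp : Set (Euc N)}
    (hsplit : {x | V x ≤ c} = Vm ∪ Vp) (hsep : 0 < setDist Vm Vp)
    {q q' : ℝ → Euc N} (hq : (q, q') ∈ Gamma V c Vm Vp)
    (hm : lagJ V c q q' univ = mc V c Vm Vp) {τ σ : ℝ} (hτσ : τ ≤ σ) {l : ℝ} (hl : 0 < l) :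
    2⁻¹ * (∫ t in τ..σ, ‖q' t‖ ^ 2) + (∫ t in τ..σ, (V (q t) - c)) ≤
    l * (2⁻¹ * (∫ t in τ..σ, ‖q' t‖ ^ 2)) + l⁻¹ * (∫ t in τ..σ, (V (q t) - c)) := by
  have hfin := mc_lt_top hV hsplit hsep hq
  obtain ⟨h1, h2, h3, h4⟩ := hq
  simp only at h1 h2 h3 h4
  set d := τ - l * τ with hd
  set s := τ + (σ - τ) / l with hs
  have hτs : τ ≤ s := by
    have : 0 ≤ (σ - τ) / l := div_nonneg (by linarith) hl.le
    linarith
  have e1 : l * τ + d = τ := by rw [hd]; ring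
  have e2 : l * s + d = σ := by rw [hd, hs]; field_simp; ring
  have Hm := h1_affine h1 hl.ne' d
  have He := h1_affine h1 (one_ne_zero) (σ - s)
  have Hg := h1_glue (s := s) Hm He (by simp only [e2]; congr 1; ring)
  have H := h1_glue (s := τ) h1 Hg (by rw [glue_le _ _ hτs]; simp only [e1])
  set G := glue s (fun t => q (l * t + d)) (fun t => q (1 * t + (σ - s))) with hGd
  set G' := glue s (fun t => l • q' (l * t + d)) (fun t => (1:ℝ) • q' (1 * t + (σ - s))) with hGd'
  set P := glue τ q G with hP
  set P' := glue τ q' G' with hP'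
  have pL : ∀ t ∈ Iic τ, P t = q t := fun t ht => glue_le _ _ ht
  have pL' : ∀ t ∈ Iic τ, P' t = q' t := fun t ht => glue_le _ _ ht
  have pM : ∀ t ∈ Ioc τ s, P t = q (l * t + d) := fun t ht => by
    rw [hP, glue_gt _ _ ht.1, hGd, glue_le _ _ ht.2]
  have pM' : ∀ t ∈ Ioc τ s, P' t = l • q' (l * t + d) := fun t ht => by
    rw [hP', glue_gt _ _ ht.1, hGd', glue_le _ _ ht.2]
  have pR : ∀ t ∈ Ioi s, P t = q (1 * t + (σ - s)) := fun t ht => by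
    rw [hP, glue_gt _ _ (hτs.trans_lt ht), hGd, glue_gt _ _ ht]
  have pR' : ∀ t ∈ Ioi s, P' t = (1:ℝ) • q' (1 * t + (σ - s)) := fun t ht => by
    rw [hP', glue_gt _ _ (hτs.trans_lt ht), hGd', glue_gt _ _ ht]
  have hPc : ∀ t, c ≤ V (P t) := by
    intro t
    rcases le_or_gt t τ with h | h
    · rw [pL t h]; exact h2 _
    · rcases le_or_gt t s with h' | h'
      · rw [pM t ⟨h, h'⟩]; exact h2 _
      · rw [pR t h']; exact h2 _
  have hG : (P, P') ∈ Gamma V c Vm Vp := by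
    refine ⟨H, hPc, fun ε hε => ?_, fun ε hε => ?_⟩
    · refine ((h3 ε hε).and_eventually (eventually_le_atBot τ)).mono ?_
      rintro t ⟨ht, ht'⟩
      simp only [pL t ht']
      exact ht
    · have h := h4 ε hε
      rw [frequently_atTop] at h ⊢
      intro a
      obtain ⟨b, hb, hb'⟩ := h (max (a + (σ - s)) (σ + 1))
      refine ⟨b - (σ - s), by linarith [le_max_left (a + (σ - s)) (σ + 1)], ?_⟩
      have hbs : b - (σ - s) ∈ Ioi s := by
        have := le_max_right (a + (σ - s)) (σ + 1)
        simp only [mem_Ioi]; linarith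
      simp only [pR _ hbs]
      rw [show 1 * (b - (σ - s)) + (σ - s) = b by ring]
      exact hb'
  have hle : lagJ V c q q' univ ≤ lagJ V c P P' univ := by
    rw [hm]; exact iInf₂_le (P, P') hG
  rw [← hm] at hfin
  rw [lagJ_split V c q q' hτσ] at hle hfin
  rw [lagJ_split V c P P' hτs, lagJ_congr V c measurableSet_Iic pL pL',
    lagJ_congr V c measurableSet_Ioc pM pM', lagJ_congr V c measurableSet_Ioi pR pR',
    lagJ_shift, show s + (σ - s) = σ by ring] at hle
  have f1 : lagJ V c q q' (Iic τ) ≠ ∞ := by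
    intro h; simp [h] at hfin
  have f2 : lagJ V c q q' (Ioi σ) ≠ ∞ := by
    intro h; simp [h] at hfin
  have hle2 := (ENNReal.add_le_add_iff_left f1).1 ((ENNReal.add_le_add_iff_right f2).1 hle)
  rw [lagJ_Ioc hV c h1 h2 hτσ, lagJ_Ioc hV c Hm (fun t => h2 _) hτs] at hle2
  have k1 : ∫ t in τ..s, ‖l • q' (l * t + d)‖ ^ 2 = l * ∫ t in τ..σ, ‖q' t‖ ^ 2 := by
    have := intervalIntegral.integral_comp_mul_add (a := τ) (b := s)
      (fun t => ‖q' t‖ ^ 2) hl.ne' d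
    rw [e1, e2] at this
    simp only [norm_smul, mul_pow, intervalIntegral.integral_const_mul]
    rw [this, Real.norm_eq_abs, sq_abs, smul_eq_mul]
    field_simp
  have k2 : ∫ t in τ..s, (V (q (l * t + d)) - c) = l⁻¹ * ∫ t in τ..σ, (V (q t) - c) := by
    have := intervalIntegral.integral_comp_mul_add (a := τ) (b := s)
      (fun t => V (q t) - c) hl.ne' d
    rw [e1, e2] at this
    rw [this, smul_eq_mul]
  rw [k1, k2] at hle2
  have hK : 0 ≤ ∫ t in τ..σ, ‖q' t‖ ^ 2 :=
    intervalIntegral.integral_nonneg hτσ (fun t _ => by positivity)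
  have hPn : 0 ≤ ∫ t in τ..σ, (V (q t) - c) :=
    intervalIntegral.integral_nonneg hτσ (fun t _ => by linarith [h2 t])
  have := (ENNReal.ofReal_le_ofReal_iff (by positivity)).1 hle2
  linarith

theorem amgm {K P : ℝ} (hP : 0 ≤ P) (hK : 0 ≤ K)
    (h : ∀ l : ℝ, 0 < l → K + P ≤ l * K + l⁻¹ * P) : K = P := by
  have key : ∀ l : ℝ, 0 < l → 0 ≤ (l - 1) * (l * K - P) := by
    intro l hl
    have h1 := h l hl
    have h2 := mul_le_mul_of_nonneg_left h1 hl.le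
    have h3 : l * (l * K + l⁻¹ * P) = l * l * K + P := by field_simp
    nlinarith
  rcases lt_trichotomy K P with hlt | heq | hgt
  · exfalso
    rcases hK.eq_or_lt with h0 | h0
    · have := key 2 (by norm_num)
      rw [← h0] at this hlt; linarith
    · have hl : 0 < (K + P) / (2 * K) := by positivity
      have := key _ hl
      have e1 : (K + P) / (2 * K) - 1 = (P - K) / (2 * K) := by field_simp; ring
      have e2 : (K + P) / (2 * K) * K - P = -((P - K) / 2) := by field_simp; ring
      rw [e1, e2] at this
      have p1 : 0 < (P - K) / (2 * K) := div_pos (by linarith) (by linarith)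
      have p2 : 0 < (P - K) / 2 := by linarith
      nlinarith [mul_pos p1 p2]
  · exact heq
  · exfalso
    have h0 : 0 < K := by linarith
    have hl : 0 < (K + P) / (2 * K) := by positivity
    have := key _ hl
    have e1 : (K + P) / (2 * K) - 1 = -((K - P) / (2 * K)) := by field_simp; ring
    have e2 : (K + P) / (2 * K) * K - P = ((K - P) / 2) := by field_simp; ring
    rw [e1, e2] at this
    have p1 : 0 < (K - P) / (2 * K) := div_pos (by linarith) (by linarith)
    have p2 : 0 < (K - P) / 2 := by linarith
    nlinarith [mul_pos p1 p2]

/-- Lemma 2.8 (equipartition of the action): on any subinterval of `(α_q, ω_q)` the kinetic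
and potential parts of the action of a minimizer coincide. -/
theorem minimizer_equipartition {N : ℕ} (hN : 0 < N) (V : Euc N → ℝ) (hV : ContDiff ℝ 1 V)
    (c : ℝ) (Vm Vp : Set (Euc N)) (hVm : IsClosed Vm) (hVp : IsClosed Vp)
    (hsplit : {x | V x ≤ c} = Vm ∪ Vp) (hsep : 0 < setDist Vm Vp)
    (R : ℝ) (hR : 0 < R) (hcoer : Coercive V c Vm Vp R)
    (q q' : ℝ → Euc N) (hq : MemM V c Vm Vp R q q')
    (τ σ : ℝ) (hτσ : τ ≤ σ)
    (hτ : alphaQ Vm q ≤ (τ : EReal)) (hσ : (σ : EReal) ≤ omegaQ Vm Vp q) :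
    2⁻¹ * ∫ t in τ..σ, ‖deriv q t‖ ^ 2 = ∫ t in τ..σ, (V (q t) - c) := by
  have hd : ∫ t in τ..σ, ‖deriv q t‖ ^ 2 = ∫ t in τ..σ, ‖q' t‖ ^ 2 := by
    apply intervalIntegral.integral_congr_ae
    filter_upwards [h1_deriv hq.1.1] with t ht _
    rw [ht]
  rw [hd]
  have hK : 0 ≤ ∫ t in τ..σ, ‖q' t‖ ^ 2 :=
    intervalIntegral.integral_nonneg hτσ (fun t _ => by positivity)
  have hPn : 0 ≤ ∫ t in τ..σ, (V (q t) - c) :=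
    intervalIntegral.integral_nonneg hτσ (fun t _ => sub_nonneg.2 (hq.1.2.1 t))
  exact amgm hPn (by positivity) (fun l hl =>
    scale_ineq hV.continuous hsplit hsep hq.1 hq.2.2.1 hτσ hl)
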